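/- For every even integer m ≥ 4, the harmonic frame E_m does not have minimal condition number: there exists a matrix A ∈ ℝ^{m×2} with β_A < β_{E_m}. (This disproves the conjecture of Xia, Xu and Xu that β_{E_m} = min_{A ∈ ℝ^{m×2}} β_A for even m ≥ 4.) -/

import Mathlib

noncomputable section

open Real
open scoped RealInnerProductSpace ENNReal

/-- ℝ² as a Euclidean space. -/
abbrev E2 : Type := EuclideanSpace ℝ (Fin 2)

/-- The vector `(x, y)` in ℝ². -/
def vec2 (x y : ℝ) : E2 := (WithLp.equiv 2 (Fin 2 → ℝ)).symm ![x, y]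

/-- The coordinates of a vector in ℝ². -/
def toFun2 (v : E2) : Fin 2 → ℝ := WithLp.equiv 2 (Fin 2 → ℝ) v

/-- The phaseless measurement map `Φ_A(x) = (|⟨a_j, x⟩|)_j`. -/
def PhiMap {m : ℕ} (a : Fin m → E2) (x : E2) : EuclideanSpace ℝ (Fin m) :=
  (WithLp.equiv 2 (Fin m → ℝ)).symm fun j => |⟪a j, x⟫|

/-- The distance `dist(x,y) = min ‖x − y‖ ‖x + y‖` (real phase retrieval distance). -/
def pdist (x y : E2) : ℝ := min ‖x - y‖ ‖x + y‖

/-- The set of Lipschitz ratios of the phaseless measurement map. -/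
def ratioSet {m : ℕ} (a : Fin m → E2) : Set ℝ :=
  {r | ∃ x y : E2, pdist x y ≠ 0 ∧ r = ‖PhiMap a x - PhiMap a y‖ / pdist x y}

/-- The optimal lower Lipschitz constant `L_A`. -/
def lipL {m : ℕ} (a : Fin m → E2) : ℝ := sInf (ratioSet a)

/-- The optimal upper Lipschitz constant `U_A`. -/
def lipU {m : ℕ} (a : Fin m → E2) : ℝ := sSup (ratioSet a)

/-- The condition number `β_A = U_A / L_A`, with `β_A = +∞` when `L_A = 0`. -/
def condNum {m : ℕ} (a : Fin m → E2) : ℝ≥0∞ :=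
  if lipL a = 0 then ⊤ else ENNReal.ofReal (lipU a / lipL a)

/-- An edge family: nonzero vectors with pairwise distinct directions summing to zero
(the edge vectors of a strictly convex polygon). -/
def IsEdgeFamily {m : ℕ} (e : Fin m → E2) : Prop :=
  (∀ j, e j ≠ 0) ∧
  (∀ i j : Fin m, i ≠ j → ‖e i‖⁻¹ • e i ≠ ‖e j‖⁻¹ • e j) ∧
  ∑ j, e j = 0

/-- The diameter-to-perimeter ratio of the polygon with edge vectors `e`. -/
def rRatio {m : ℕ} (e : Fin m → E2) : ℝ :=
  sSup {s | ∃ u : E2, ‖u‖ = 1 ∧ s = ∑ j, |⟪e j, u⟫|} / (2 * ∑ j, ‖e j‖)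

/-- An optimal edge family: minimizes `rRatio` among all edge families of size `m`. -/
def IsOptimalEdgeFamily {m : ℕ} (e : Fin m → E2) : Prop :=
  IsEdgeFamily e ∧ ∀ e' : Fin m → E2, IsEdgeFamily e' → rRatio e ≤ rRatio e'

/-- The complex square map on ℝ² ≅ ℂ: `f(t·(cos φ, sin φ)) = t²·(cos 2φ, sin 2φ)`. -/
def csq (v : E2) : E2 :=
  vec2 (toFun2 v 0 ^ 2 - toFun2 v 1 ^ 2) (2 * toFun2 v 0 * toFun2 v 1)

/-- The harmonic frame `E_m`: the `j`-th row is `(cos((j−1)π/m), sin((j−1)π/m))`, `j = 1,…,m`. -/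
def harmonicFrame (m : ℕ) : Fin m → E2 :=
  fun j => vec2 (Real.cos ((j : ℕ) * π / m)) (Real.sin ((j : ℕ) * π / m))


lemma le_of_sq_le_sq_aux {a b : ℝ} (h : a ^ 2 ≤ b ^ 2) (hb : 0 ≤ b) : a ≤ b :=
  (le_abs_self a).trans (abs_le_of_sq_le_sq h hb)

/-- Unit vector at angle `t`. -/
def uv (t : ℝ) : E2 := vec2 (Real.cos t) (Real.sin t)

lemma inner_uv (t R p : ℝ) : ⟪uv t, R • uv p⟫ = R * Real.cos (t - p) := by
  simp [uv, vec2, PiLp.inner_apply, Fin.sum_univ_two, Real.cos_sub]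
  ring

lemma norm_uv (t : ℝ) : ‖uv t‖ = 1 := by
  simp [uv, vec2, EuclideanSpace.norm_eq, Fin.sum_univ_two]

lemma exists_polar (u : E2) : ∃ p : ℝ, u = ‖u‖ • uv p := by
  refine ⟨Complex.arg ⟨u 0, u 1⟩, ?_⟩
  have hn : ‖u‖ = ‖(⟨u 0, u 1⟩ : ℂ)‖ := by
    rw [EuclideanSpace.norm_eq, Complex.norm_def, Complex.normSq_mk]
    simp [Fin.sum_univ_two, sq]
  have h0 := Complex.norm_mul_cos_arg ⟨u 0, u 1⟩
  have h1 := Complex.norm_mul_sin_arg ⟨u 0, u 1⟩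
  rw [← hn] at h0 h1
  ext i
  fin_cases i
  · simpa [uv, vec2] using h0.symm
  · simpa [uv, vec2] using h1.symm

lemma sq_abs_sub_abs (s t : ℝ) : (|s| - |t|) ^ 2 = min ((s + t) ^ 2) ((s - t) ^ 2) := by
  rcases abs_cases s with ⟨h1, h2⟩ | ⟨h1, h2⟩ <;> rcases abs_cases t with ⟨h3, h4⟩ | ⟨h3, h4⟩ <;>
    rw [h1, h3]
  · rw [min_eq_right (by nlinarith)]
  · rw [min_eq_left (by nlinarith)]; ring
  · rw [min_eq_left (by nlinarith)]; ring
  · rw [min_eq_right (by nlinarith)]; ring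

lemma phi_sq (m : ℕ) (g : ℕ → E2) (x y : E2) :
    ‖PhiMap (fun j : Fin m => g j) x - PhiMap (fun j : Fin m => g j) y‖ ^ 2 =
      ∑ j ∈ Finset.range m, min (⟪g j, x + y⟫ ^ 2) (⟪g j, x - y⟫ ^ 2) := by
  rw [EuclideanSpace.norm_sq_eq, Finset.sum_range]
  refine Finset.sum_congr rfl fun j _ => ?_
  simp only [PhiMap, inner_add_right, inner_sub_right]
  rw [← sq_abs_sub_abs]
  simp

/-- Telescoping sum of cosines. -/
lemma tele_cos (n : ℕ) (h c : ℝ) :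
    2 * Real.sin h * ∑ j ∈ Finset.range n, Real.cos (2 * h * j + c) =
      Real.sin (2 * h * n + c - h) - Real.sin (c - h) := by
  induction n with
  | zero => simp
  | succ n ih =>
    rw [Finset.sum_range_succ, mul_add, ih]
    have e1 : 2 * h * ((n + 1 : ℕ) : ℝ) + c - h = (2 * h * n + c) + h := by push_cast; ring
    rw [e1, Real.sin_add, Real.sin_sub (2 * h * n + c) h]
    ring

lemma sum_cos_zero (n k : ℕ) (hn : 0 < n) (c : ℝ) (hs : Real.sin (π * k / n) ≠ 0) :
    ∑ j ∈ Finset.range n, Real.cos (2 * (π * k / n) * j + c) = 0 := by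
  have h := tele_cos n (π * k / n) c
  have hn' : (n : ℝ) ≠ 0 := by positivity
  have e : 2 * (π * k / n) * n + c - π * k / n = (c - π * k / n) + k * (2 * π) := by
    field_simp; ring
  rw [e, Real.sin_add_nat_mul_two_pi, sub_self] at h
  rcases mul_eq_zero.1 h with h | h
  · exact absurd h (by simpa using hs)
  · exact h

lemma integral_abs_cos (a : ℝ) : ∫ x in a..(a + π), |Real.cos x| = 2 := by
  have hp : Function.Periodic (fun x => |Real.cos x|) π := by
    intro x; simp [Real.cos_add_pi]
  rw [hp.intervalIntegral_add_eq a (-(π / 2))]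
  have : ∫ x in (-(π / 2))..(-(π / 2) + π), |Real.cos x| =
      ∫ x in (-(π / 2))..(-(π / 2) + π), Real.cos x := by
    apply intervalIntegral.integral_congr
    intro x hx
    rw [Set.uIcc_of_le (by linarith [Real.pi_pos])] at hx
    exact abs_of_nonneg (Real.cos_nonneg_of_mem_Icc ⟨hx.1, by linarith [hx.2]⟩)
  rw [this, integral_cos]
  have : -(π / 2) + π = π / 2 := by ring
  rw [this, Real.sin_neg, Real.sin_pi_div_two]; norm_num

lemma abs_sin_sub_le (a b : ℝ) (hab : a ≤ b) :
    |Real.sin b - Real.sin a| ≤ ∫ x in a..b, |Real.cos x| := by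
  rw [← integral_cos]
  exact intervalIntegral.abs_integral_le_integral_abs hab

lemma sum_abs_cos_le (n : ℕ) (hn : 0 < n) (c : ℝ) :
    Real.sin (π / (2 * n)) * ∑ j ∈ Finset.range n, |Real.cos (π * j / n + c)| ≤ 1 := by
  set h := π / (2 * n) with hh
  have hn' : (0 : ℝ) < n := by positivity
  have hpos : 0 < h := by positivity
  have hs : 0 ≤ Real.sin h := by
    apply Real.sin_nonneg_of_nonneg_of_le_pi hpos.le
    rw [hh]; apply div_le_self Real.pi_pos.le
    have : (1 : ℝ) ≤ n := by exact_mod_cast hn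
    linarith
  have hf : Continuous fun x => |Real.cos x| := Real.continuous_cos.abs
  let a : ℕ → ℝ := fun j => c - h + 2 * h * j
  have hsum : ∑ j ∈ Finset.range n, ∫ x in (a j)..(a (j + 1)), |Real.cos x| = 2 := by
    rw [intervalIntegral.sum_integral_adjacent_intervals]
    · have e0 : a 0 = c - h := by simp [a]
      have e1 : a n = (c - h) + π := by simp only [a, hh]; field_simp
      rw [e0, e1, integral_abs_cos]
    · intro k _; exact hf.intervalIntegrable _ _
  have hle : ∀ j ∈ Finset.range n, 2 * Real.sin h * |Real.cos (π * j / n + c)| ≤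
      ∫ x in (a j)..(a (j + 1)), |Real.cos x| := by
    intro j _
    refine le_trans (le_of_eq ?_) (abs_sin_sub_le _ _ ?_)
    · have e : π * j / n + c = 2 * h * j + c := by rw [hh]; field_simp
      have e0 : a j = (2 * h * j + c) - h := by simp only [a]; ring
      have e1 : a (j + 1) = (2 * h * j + c) + h := by simp only [a]; push_cast; ring
      rw [e, e0, e1, Real.sin_add, Real.sin_sub]
      rw [show ∀ p q r s : ℝ, p * q + r * s - (p * q - r * s) = (2 * s) * r by intros; ring,
        abs_mul, abs_of_nonneg (by linarith : 0 ≤ 2 * Real.sin h)]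
    · simp only [a]; push_cast; nlinarith
  have := Finset.sum_le_sum hle
  rw [hsum, ← Finset.mul_sum] at this
  linarith

lemma min_cos_sq (s t : ℝ) : min (Real.cos s ^ 2) (Real.cos t ^ 2) =
    1 / 2 + (Real.cos (2 * s) + Real.cos (2 * t)) / 4 -
      |Real.sin (s + t)| * |Real.sin (s - t)| / 2 := by
  have hmin : ∀ a b : ℝ, min a b = (a + b) / 2 - |a - b| / 2 := by
    intro a b
    have := min_add_max a b
    have := max_sub_min_eq_abs' a b
    linarith
  rw [hmin, ← abs_mul]
  have : Real.cos s ^ 2 - Real.cos t ^ 2 = -(Real.sin (s + t) * Real.sin (s - t)) := by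
    rw [Real.sin_add, Real.sin_sub]
    have h1 := Real.sin_sq_add_cos_sq s
    have h2 := Real.sin_sq_add_cos_sq t
    linear_combination Real.cos t ^ 2 * h1 - Real.cos s ^ 2 * h2
  rw [this, abs_neg, Real.cos_two_mul, Real.cos_two_mul]
  ring

/-- Sum of squared measurements for a tight frame of unit vectors. -/
lemma sum_cos_sq (n k : ℕ) (hn : 0 < n) (p : ℝ) (hs : Real.sin (π * k / n) ≠ 0) :
    ∑ j ∈ Finset.range n, Real.cos (π * k / n * j - p) ^ 2 = n / 2 := by
  have h := sum_cos_zero n k hn (-(2 * p)) hs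
  have : ∀ j ∈ Finset.range n, Real.cos (π * k / n * j - p) ^ 2 =
      1 / 2 + Real.cos (2 * (π * k / n) * j + -(2 * p)) / 2 := by
    intro j _
    rw [Real.cos_sq]; congr 3; ring
  rw [Finset.sum_congr rfl this, Finset.sum_add_distrib,
    ← Finset.sum_div (Finset.range n) (fun j : ℕ => Real.cos (2 * (π * k / n) * j + -(2 * p))), h]
  simp; ring

lemma sum_min_eq (n k : ℕ) (hn : 0 < n) (p q : ℝ) (hs : Real.sin (π * k / n) ≠ 0) :
    ∑ j ∈ Finset.range n,
      min (Real.cos (π * k / n * j - p) ^ 2) (Real.cos (π * k / n * j - q) ^ 2) =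
    n / 2 - |Real.sin (q - p)| / 2 *
      ∑ j ∈ Finset.range n, |Real.sin (2 * (π * k / n) * j - (p + q))| := by
  have h1 := sum_cos_zero n k hn (-(2 * p)) hs
  have h2 := sum_cos_zero n k hn (-(2 * q)) hs
  have : ∀ j ∈ Finset.range n,
      min (Real.cos (π * k / n * j - p) ^ 2) (Real.cos (π * k / n * j - q) ^ 2) =
      1 / 2 + (Real.cos (2 * (π * k / n) * j + -(2 * p)) +
        Real.cos (2 * (π * k / n) * j + -(2 * q))) / 4 -
        |Real.sin (q - p)| / 2 * |Real.sin (2 * (π * k / n) * j - (p + q))| := by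
    intro j _
    rw [min_cos_sq]
    rw [show 2 * (π * k / n * j - p) = 2 * (π * k / n) * j + -(2 * p) by ring,
      show 2 * (π * k / n * j - q) = 2 * (π * k / n) * j + -(2 * q) by ring,
      show π * k / n * j - p + (π * k / n * j - q) = 2 * (π * k / n) * j - (p + q) by ring,
      show π * k / n * j - p - (π * k / n * j - q) = q - p by ring]
    ring
  rw [Finset.sum_congr rfl this, Finset.sum_sub_distrib, Finset.sum_add_distrib,
    ← Finset.sum_div (Finset.range n) (fun j : ℕ => Real.cos (2 * (π * k / n) * j + -(2 * p)) +
      Real.cos (2 * (π * k / n) * j + -(2 * q))), Finset.sum_add_distrib, h1, h2, ← Finset.mul_sum]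
  simp; ring

/-- The odd case: lower bound. -/
lemma odd_lower (n k : ℕ) (hk : 2 ≤ k) (hnk : n + 1 = 2 * k) (p q : ℝ)
    (hs : Real.sin (π * k / n) ≠ 0) (hs2 : 0 < Real.sin (π / (2 * n))) :
    n / 2 - 1 / (2 * Real.sin (π / (2 * n))) ≤ ∑ j ∈ Finset.range n,
      min (Real.cos (π * k / n * j - p) ^ 2) (Real.cos (π * k / n * j - q) ^ 2) := by
  have hn : 0 < n := by omega
  have hn' : (n : ℝ) ≠ 0 := by positivity
  have hc : (n : ℝ) + 1 = 2 * k := by exact_mod_cast hnk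
  rw [sum_min_eq n k hn p q hs]
  have h := sum_abs_cos_le n hn (-(p + q) - π / 2)
  have e : ∑ j ∈ Finset.range n, |Real.sin (2 * (π * k / n) * j - (p + q))| =
      ∑ j ∈ Finset.range n, |Real.cos (π * j / n + (-(p + q) - π / 2))| := by
    refine Finset.sum_congr rfl fun j _ => ?_
    have : 2 * (π * k / n) * j - (p + q) = (π * j / n + -(p + q)) + j * π := by
      have : (k : ℝ) = (n + 1) / 2 := by linarith
      rw [this]; field_simp; ring
    rw [this, Real.sin_add_nat_mul_pi, abs_mul, abs_pow, abs_neg, abs_one, one_pow, one_mul,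
      ← add_sub_assoc, Real.cos_sub_pi_div_two]
  rw [e]
  set S := ∑ j ∈ Finset.range n, |Real.cos (π * j / n + (-(p + q) - π / 2))| with hS
  have hS0 : 0 ≤ S := Finset.sum_nonneg fun _ _ => abs_nonneg _
  have h1 : |Real.sin (q - p)| ≤ 1 := Real.abs_sin_le_one _
  have h2 : S ≤ 1 / Real.sin (π / (2 * n)) := by
    rw [le_div_iff₀ hs2]; linarith
  have h3 : |Real.sin (q - p)| * S ≤ S := mul_le_of_le_one_left hS0 h1
  have : 1 / (2 * Real.sin (π / (2 * n))) = (1 / Real.sin (π / (2 * n))) / 2 := by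
    field_simp
  rw [this]; linarith

/-- The even case: a good pair of directions. -/
lemma even_upper (k : ℕ) (hk : 2 ≤ k) (hs : 0 < Real.sin (π / (2 * k))) :
    ∃ p q : ℝ, ∑ j ∈ Finset.range (2 * k),
      min (Real.cos (π * j / (2 * k) - p) ^ 2) (Real.cos (π * j / (2 * k) - q) ^ 2) ≤
      k - 1 / Real.sin (π / (2 * k)) := by
  set h := π / (2 * k) with hh
  have hk' : (k : ℝ) ≠ 0 := by positivity
  refine ⟨-h / 2 - π / 4, -h / 2 + π / 4, ?_⟩
  have hs' : Real.sin (π * (1 : ℕ) / (2 * k : ℕ)) ≠ 0 := by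
    push_cast; rw [mul_one]; exact hs.ne'
  have key := sum_min_eq (2 * k) 1 (by omega) (-h / 2 - π / 4) (-h / 2 + π / 4) hs'
  have e1 : -h / 2 + π / 4 - (-h / 2 - π / 4) = π / 2 := by ring
  have e2 : -h / 2 - π / 4 + (-h / 2 + π / 4) = -h := by ring
  rw [e1, e2, Real.sin_pi_div_two, abs_one] at key
  have e3 : ∀ j : ℕ, π * (1 : ℕ) / (2 * k : ℕ) * j = π * j / (2 * k) := by
    intro j; push_cast; ring
  have e3' : ∀ j : ℕ, 2 * (π * (1 : ℕ) / (2 * k : ℕ)) * j = 2 * (π * j / (2 * k)) := by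
    intro j; push_cast; ring
  simp only [e3, e3'] at key
  rw [key]
  have ht := tele_cos k h (h - π / 2)
  have e4 : 2 * h * k + (h - π / 2) - h = π / 2 := by rw [hh]; field_simp; ring
  have e5 : h - π / 2 - h = -(π / 2) := by ring
  rw [e4, e5, Real.sin_neg, Real.sin_pi_div_two] at ht
  have hT : ∑ j ∈ Finset.range k, Real.cos (2 * h * j + (h - π / 2)) = 1 / Real.sin h := by
    rw [eq_div_iff hs.ne']; linarith
  have hA : 1 / Real.sin h ≤
      ∑ j ∈ Finset.range k, |Real.cos (2 * h * j + (h - π / 2))| := by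
    rw [← hT]; exact Finset.sum_le_sum fun _ _ => le_abs_self _
  have hB : ∑ j ∈ Finset.range (2 * k), |Real.sin (2 * (π * j / (2 * k)) - -h)| =
      2 * ∑ j ∈ Finset.range k, |Real.cos (2 * h * j + (h - π / 2))| := by
    rw [two_mul k, Finset.sum_range_add (fun j : ℕ => |Real.sin (2 * (π * j / (2 * k)) - -h)|),
      two_mul (∑ j ∈ Finset.range k, |Real.cos (2 * h * j + (h - π / 2))|)]
    congr 1
    · refine Finset.sum_congr rfl fun j _ => ?_
      rw [← add_sub_assoc, Real.cos_sub_pi_div_two]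
      congr 2; rw [hh]; ring
    · refine Finset.sum_congr rfl fun j _ => ?_
      rw [← add_sub_assoc, Real.cos_sub_pi_div_two]
      have : 2 * (π * ((k + j : ℕ) : ℝ) / (2 * k)) - -h = (2 * h * j + h) + π := by
        rw [hh]; push_cast; field_simp; ring
      rw [this, Real.sin_add_pi, abs_neg]
  rw [hB]; push_cast
  linarith

lemma ratio_nonneg {m : ℕ} (a : Fin m → E2) : ∀ r ∈ ratioSet a, 0 ≤ r := by
  rintro r ⟨x, y, h, rfl⟩
  apply div_nonneg (norm_nonneg _)
  exact le_min (norm_nonneg _) (norm_nonneg _)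

lemma pdist_nonneg (x y : E2) : 0 ≤ pdist x y := le_min (norm_nonneg _) (norm_nonneg _)

lemma ratio_nonempty {m : ℕ} (a : Fin m → E2) : (ratioSet a).Nonempty := by
  refine ⟨_, uv 0, 0, ?_, rfl⟩
  simp [pdist, norm_uv]

lemma ratio_le (m : ℕ) (g : ℕ → E2) (C : ℝ) (hC : 0 ≤ C)
    (h : ∀ u : E2, ∑ j ∈ Finset.range m, ⟪g j, u⟫ ^ 2 ≤ C * ‖u‖ ^ 2) :
    ∀ r ∈ ratioSet (fun j : Fin m => g j), r ≤ √C := by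
  rintro r ⟨x, y, hd, rfl⟩
  have hd' : 0 < pdist x y := lt_of_le_of_ne (pdist_nonneg x y) hd.symm
  rw [div_le_iff₀ hd']
  refine le_of_sq_le_sq_aux ?_ (mul_nonneg (Real.sqrt_nonneg _) hd'.le)
  rw [phi_sq, mul_pow, Real.sq_sqrt hC]
  rcases min_choice ‖x - y‖ ‖x + y‖ with hm | hm
  · rw [pdist, hm]
    exact (Finset.sum_le_sum fun _ _ => min_le_right _ _).trans (h _)
  · rw [pdist, hm]
    exact (Finset.sum_le_sum fun _ _ => min_le_left _ _).trans (h _)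

lemma le_ratio (m : ℕ) (g : ℕ → E2) (c : ℝ) (hc : 0 ≤ c)
    (h : ∀ p q : ℝ, c ≤ ∑ j ∈ Finset.range m, min (⟪g j, uv p⟫ ^ 2) (⟪g j, uv q⟫ ^ 2)) :
    ∀ r ∈ ratioSet (fun j : Fin m => g j), √c ≤ r := by
  rintro r ⟨x, y, hd, rfl⟩
  have hd' : 0 < pdist x y := lt_of_le_of_ne (pdist_nonneg x y) hd.symm
  rw [le_div_iff₀ hd']
  refine le_of_sq_le_sq_aux ?_ (norm_nonneg _)
  rw [phi_sq, mul_pow, Real.sq_sqrt hc]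
  obtain ⟨p, hp⟩ := exists_polar (x + y)
  obtain ⟨q, hq⟩ := exists_polar (x - y)
  refine (mul_le_mul_of_nonneg_right (h p q) (sq_nonneg _)).trans ?_
  rw [Finset.sum_mul]
  refine Finset.sum_le_sum fun j _ => ?_
  have h1 : pdist x y ≤ ‖x + y‖ := min_le_right _ _
  have h2 : pdist x y ≤ ‖x - y‖ := min_le_left _ _
  have h1' : pdist x y ^ 2 ≤ ‖x + y‖ ^ 2 := pow_le_pow_left₀ hd'.le h1 2
  have h2' : pdist x y ^ 2 ≤ ‖x - y‖ ^ 2 := pow_le_pow_left₀ hd'.le h2 2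
  have e1 : ⟪g j, x + y⟫ ^ 2 = ⟪g j, uv p⟫ ^ 2 * ‖x + y‖ ^ 2 := by
    conv_lhs => rw [hp, inner_smul_right]
    ring
  have e2 : ⟪g j, x - y⟫ ^ 2 = ⟪g j, uv q⟫ ^ 2 * ‖x - y‖ ^ 2 := by
    conv_lhs => rw [hq, inner_smul_right]
    ring
  rw [e1, e2]
  apply le_min
  · exact mul_le_mul (min_le_left _ _) h1' (sq_nonneg _) (sq_nonneg _)
  · exact mul_le_mul (min_le_right _ _) h2' (sq_nonneg _) (sq_nonneg _)

lemma ratio_mem (m : ℕ) (g : ℕ → E2) (p q : ℝ) :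
    √(∑ j ∈ Finset.range m, min (⟪g j, uv p⟫ ^ 2) (⟪g j, uv q⟫ ^ 2)) ∈
      ratioSet (fun j : Fin m => g j) := by
  have e1 : (1 / 2 : ℝ) • (uv p + uv q) + (1 / 2 : ℝ) • (uv p - uv q) = uv p := by module
  have e2 : (1 / 2 : ℝ) • (uv p + uv q) - (1 / 2 : ℝ) • (uv p - uv q) = uv q := by module
  have hd : pdist ((1 / 2 : ℝ) • (uv p + uv q)) ((1 / 2 : ℝ) • (uv p - uv q)) = 1 := by
    rw [pdist, e1, e2, norm_uv, norm_uv, min_self]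
  refine ⟨(1 / 2 : ℝ) • (uv p + uv q), (1 / 2 : ℝ) • (uv p - uv q), by rw [hd]; exact one_ne_zero, ?_⟩
  rw [hd, div_one, ← Real.sqrt_sq (norm_nonneg (PhiMap _ _ - PhiMap _ _)), phi_sq, e1, e2]

/-- The frame: `E_{m-1}` (reordered, up to signs) plus one zero row. -/
def gA (n k : ℕ) (j : ℕ) : E2 := if j < n then uv (π * k / n * j) else 0

lemma inner_uv' (t p : ℝ) : ⟪uv t, uv p⟫ = Real.cos (t - p) := by
  simpa using inner_uv t 1 p

/-- For every even `m ≥ 4`, the harmonic frame `E_m` does not have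
minimal condition number: some `A ∈ ℝ^{m×2}` has `β_A < β_{E_m}`. -/
theorem stmt10 {m : ℕ} (hm : 4 ≤ m) (heven : Even m) :
    ∃ A : Fin m → E2, condNum A < condNum (harmonicFrame m) := by
  obtain ⟨k, hk⟩ := heven
  have hk2 : 2 ≤ k := by omega
  obtain rfl : m = 2 * k := by omega
  obtain ⟨n, hnk⟩ : ∃ n, n + 1 = 2 * k := ⟨2 * k - 1, by omega⟩
  have hn : 0 < n := by omega
  have hkn : k < n := by omega
  have hnR : (0 : ℝ) < n := by exact_mod_cast hn
  have hkR : (2 : ℝ) ≤ k := by exact_mod_cast hk2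
  have hkR0 : (0 : ℝ) < k := by linarith
  have hknR : (k : ℝ) < n := by exact_mod_cast hkn
  have hpi := Real.pi_pos
  -- trigonometric facts
  have ht1 : 0 < π / (2 * n) := by positivity
  have ht2 : 0 < π / (2 * k) := by positivity
  have ht12 : π / (2 * n) < π / (2 * k) := by gcongr
  have ht2' : π / (2 * k) < π / 2 := by gcongr; linarith
  have hs1 : 0 < Real.sin (π / (2 * n)) := Real.sin_pos_of_pos_of_lt_pi ht1 (by linarith)
  have hs2 : 0 < Real.sin (π / (2 * k)) := Real.sin_pos_of_pos_of_lt_pi ht2 (by linarith)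
  have hsk : Real.sin (π * k / n) ≠ 0 := by
    apply ne_of_gt
    apply Real.sin_pos_of_pos_of_lt_pi (by positivity)
    rw [div_lt_iff₀ hnR]; nlinarith
  have hs1k : Real.sin (π * (1 : ℕ) / (2 * k : ℕ)) ≠ 0 := by
    push_cast; rw [mul_one]; exact hs2.ne'
  have hconc : k * Real.sin (π / (2 * k)) < n * Real.sin (π / (2 * n)) := by
    have hp0 : (0 : ℝ) < 1 - k / n := by rw [sub_pos, div_lt_one hnR]; exact hknR
    have hp1 : (0 : ℝ) < k / n := by positivity
    have hm0 : (0 : ℝ) ∈ Set.Icc 0 π := ⟨le_rfl, hpi.le⟩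
    have hm1 : π / (2 * k) ∈ Set.Icc 0 π := ⟨ht2.le, by linarith⟩
    have := strictConcaveOn_sin_Icc.2 hm0 hm1 ht2.ne hp0 hp1 (by ring)
    simp only [smul_eq_mul, mul_zero, Real.sin_zero, zero_add] at this
    have e : (k : ℝ) / n * (π / (2 * k)) = π / (2 * n) := by field_simp
    rw [e, div_mul_eq_mul_div, div_lt_iff₀ hnR] at this
    linarith
  have hone : 1 < n * Real.sin (π / (2 * n)) := by
    have := Real.mul_lt_sin ht1 (by linarith)
    have e : 2 / π * (π / (2 * n)) = 1 / n := by field_simp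
    rw [e, div_lt_iff₀ hnR] at this
    linarith
  -- constants for A
  set lA : ℝ := n / 2 - 1 / (2 * Real.sin (π / (2 * n))) with hlA
  set lE : ℝ := k - 1 / Real.sin (π / (2 * k)) with hlE
  have hlA0 : 0 < lA := by
    have : lA = (n * Real.sin (π / (2 * n)) - 1) / (2 * Real.sin (π / (2 * n))) := by
      rw [hlA]; generalize Real.sin (π / (2 * n)) = s at hs1; field_simp
    rw [this]; exact div_pos (by linarith) (by linarith)
  have hcross : n / 2 * lE < k * lA := by
    have e1 : k * lA - n / 2 * lE = (n * Real.sin (π / (2 * n)) - k * Real.sin (π / (2 * k))) /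
        (2 * Real.sin (π / (2 * n)) * Real.sin (π / (2 * k))) := by
      rw [hlA, hlE]
      generalize Real.sin (π / (2 * n)) = s at hs1
      generalize Real.sin (π / (2 * k)) = t at hs2
      field_simp; ring
    have : 0 < k * lA - n / 2 * lE := by
      rw [e1]; exact div_pos (by linarith) (by positivity)
    linarith
  have hgA : ∀ j ∈ Finset.range n, gA n k j = uv (π * k / n * j) := by
    intro j hj; rw [gA, if_pos (Finset.mem_range.1 hj)]
  have hgn : gA n k n = 0 := by simp [gA]
  have hUA : ∀ r ∈ ratioSet (fun j : Fin (2 * k) => gA n k j), r ≤ √(n / 2 : ℝ) := by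
    apply ratio_le _ _ _ (by positivity)
    intro u
    obtain ⟨p, hp⟩ := exists_polar u
    rw [← hnk, Finset.sum_range_succ, hgn]
    have : ∀ j ∈ Finset.range n, ⟪gA n k j, u⟫ ^ 2 =
        ‖u‖ ^ 2 * Real.cos (π * k / n * j - p) ^ 2 := by
      intro j hj
      rw [hgA j hj]
      conv_lhs => rw [hp, inner_uv]
      ring
    rw [Finset.sum_congr rfl this, ← Finset.mul_sum, sum_cos_sq n k hn p hsk]
    simp [mul_comm]
  have hLA : ∀ r ∈ ratioSet (fun j : Fin (2 * k) => gA n k j), √lA ≤ r := by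
    apply le_ratio _ _ _ hlA0.le
    intro p q
    rw [← hnk, Finset.sum_range_succ, hgn]
    refine (odd_lower n k hk2 hnk p q hsk hs1).trans (le_of_eq ?_)
    rw [Finset.sum_congr rfl fun j hj => by rw [← inner_uv', ← inner_uv', ← hgA j hj]]
    simp
  have hULA : lipU (fun j : Fin (2 * k) => gA n k j) ≤ √(n / 2 : ℝ) :=
    csSup_le (ratio_nonempty _) hUA
  have hLLA : √lA ≤ lipL (fun j : Fin (2 * k) => gA n k j) :=
    le_csInf (ratio_nonempty _) hLA
  have hLA0 : 0 < lipL (fun j : Fin (2 * k) => gA n k j) :=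
    lt_of_lt_of_le (Real.sqrt_pos.2 hlA0) hLLA
  refine ⟨fun j => gA n k j, ?_⟩
  rw [condNum, if_neg hLA0.ne', condNum]
  split_ifs with hE
  · exact ENNReal.ofReal_lt_top
  -- constants for E
  let gE : ℕ → E2 := fun j => uv (π * j / (2 * k))
  have hEq : harmonicFrame (2 * k) = fun j : Fin (2 * k) => gE j := by
    funext j
    simp only [harmonicFrame, gE, uv]
    push_cast
    rw [mul_comm π]
  rw [hEq] at hE ⊢
  have hsq : ∀ p, ∑ j ∈ Finset.range (2 * k), Real.cos (π * j / (2 * k) - p) ^ 2 = k := by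
    intro p
    have := sum_cos_sq (2 * k) 1 (by omega) p hs1k
    push_cast at this
    rw [mul_div_cancel_left₀ _ two_ne_zero] at this
    refine (Finset.sum_congr rfl fun j _ => ?_).trans this
    congr 2; ring
  have hUE : ∀ r ∈ ratioSet (fun j : Fin (2 * k) => gE j), r ≤ √(k : ℝ) := by
    apply ratio_le _ _ _ hkR0.le
    intro u
    obtain ⟨p, hp⟩ := exists_polar u
    have : ∀ j ∈ Finset.range (2 * k), ⟪gE j, u⟫ ^ 2 =
        ‖u‖ ^ 2 * Real.cos (π * j / (2 * k) - p) ^ 2 := by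
      intro j hj
      conv_lhs => rw [hp, inner_uv]
      ring
    rw [Finset.sum_congr rfl this, ← Finset.mul_sum, hsq p, mul_comm]
  have hUE' : √(k : ℝ) ≤ lipU (fun j : Fin (2 * k) => gE j) := by
    apply le_csSup ⟨_, hUE⟩
    have := ratio_mem (2 * k) gE 0 0
    simp only [min_self, gE, inner_uv', hsq] at this
    exact this
  have hLE' : lipL (fun j : Fin (2 * k) => gE j) ≤ √lE := by
    obtain ⟨p, q, hpq⟩ := even_upper k hk2 hs2
    have := ratio_mem (2 * k) gE p q
    refine (csInf_le ⟨0, ratio_nonneg _⟩ this).trans (Real.sqrt_le_sqrt ?_)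
    simp only [gE, inner_uv']
    exact hpq
  have hLE0 : 0 < lipL (fun j : Fin (2 * k) => gE j) :=
    lt_of_le_of_ne (Real.sInf_nonneg (ratio_nonneg _)) (Ne.symm hE)
  have hlE0 : 0 < lE := Real.sqrt_pos.1 (hLE0.trans_le hLE')
  have hUE0 : 0 < lipU (fun j : Fin (2 * k) => gE j) := (Real.sqrt_pos.2 hkR0).trans_le hUE'
  rw [ENNReal.ofReal_lt_ofReal_iff (div_pos hUE0 hLE0)]
  calc _ ≤ √(n / 2 : ℝ) / √lA := div_le_div₀ (Real.sqrt_nonneg _) hULA (Real.sqrt_pos.2 hlA0) hLLA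
    _ = √(n / 2 / lA) := (Real.sqrt_div (by positivity) _).symm
    _ < √(k / lE) := by
      apply Real.sqrt_lt_sqrt (by positivity)
      rw [div_lt_div_iff₀ hlA0 hlE0]; exact hcross
    _ = √(k : ℝ) / √lE := Real.sqrt_div hkR0.le _
    _ ≤ _ := div_le_div₀ hUE0.le hUE' hLE0 hLE'
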